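/- On ℝ⁷: (e₆∧e₇)⌟⋆φ₀ = e²∧e³ + e⁴∧e⁵ and (e₆∧e₇)⌟φ₀ = −e¹ up to the sign conventions used (the paper computes (∂₆∧∂₇)⌟φ₀ = dx¹), but there exists NO vector v ∈ ℝ⁷ with v⌟φ₀ = e²∧e³ + e⁴∧e⁵. Consequently, on (ℝ⁷,φ₀) the 1-form x²dx³ + x⁴dx⁵ is coRochesterian but not Rochesterian, so the inclusion of Rochesterian 1-forms into coRochesterian 1-forms is strict in general. -/

import Mathlib

/-!
STATEMENT 14: On `ℝ⁷`: `(e₆ ∧ e₇) ⌟ ⋆φ₀ = e² ∧ e³ + e⁴ ∧ e⁵` and (with the insertion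
convention `(v₁ ∧ v₂) ⌟ α = v₂ ⌟ v₁ ⌟ α` used here, as in the paper's computation
`(∂₆ ∧ ∂₇) ⌟ φ₀ = dx¹`) `(e₆ ∧ e₇) ⌟ φ₀ = e¹`, but there exists NO vector `v ∈ ℝ⁷` with
`v ⌟ φ₀ = e² ∧ e³ + e⁴ ∧ e⁵`.  Consequently, on `(ℝ⁷, φ₀)` the 1-form
`α = x² dx³ + x⁴ dx⁵` (whose exterior derivative is the constant 2-form
`e² ∧ e³ + e⁴ ∧ e⁵`) is coRochesterian but not Rochesterian, so the inclusion of
Rochesterian 1-forms into coRochesterian 1-forms is strict in general.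
(All indices are 1-based in this description and 0-based in the code below.)
-/

noncomputable section

open scoped BigOperators Matrix

/-- `ℝ⁷`. -/
abbrev V7 : Type := Fin 7 → ℝ

/-- The basis exterior `k`-form `e^{i₁ ⋯ i_k}` on `ℝ⁷`. -/
def eForm {k : ℕ} (idx : Fin k → Fin 7) : AlternatingMap ℝ V7 ℝ (Fin k) :=
  (Matrix.detRowAlternating (R := ℝ) (n := Fin k)).compLinearMap
    (LinearMap.pi fun t => LinearMap.proj (idx t))

/-- The standard `G₂` 3-form `φ₀` (0-based indices). -/
def phi0 : AlternatingMap ℝ V7 ℝ (Fin 3) :=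
  eForm ![0, 1, 2] + eForm ![0, 3, 4] + eForm ![0, 5, 6] + eForm ![1, 3, 5]
    - eForm ![1, 4, 6] - eForm ![2, 3, 6] - eForm ![2, 4, 5]

/-- The Hodge dual 4-form `⋆φ₀` (0-based indices). -/
def psi0 : AlternatingMap ℝ V7 ℝ (Fin 4) :=
  eForm ![3, 4, 5, 6] + eForm ![1, 2, 5, 6] + eForm ![1, 2, 3, 4] + eForm ![0, 2, 4, 6]
    - eForm ![0, 2, 3, 5] - eForm ![0, 1, 4, 5] - eForm ![0, 1, 3, 6]

/-- The `i`-th standard basis vector of `ℝ⁷`. -/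
def e7 (i : Fin 7) : V7 := Pi.single i 1

/-- Contraction `Q ⌟ α` of an `(l+2)`-form `α` by the 2-multivector with antisymmetric
coefficient matrix `a`; `(X ∧ Y) ⌟ α = Y ⌟ X ⌟ α = α (X, Y, ·, …, ·)`. -/
def contr2 {l : ℕ} (a : Matrix (Fin 7) (Fin 7) ℝ) (α : AlternatingMap ℝ V7 ℝ (Fin (l + 2))) :
    AlternatingMap ℝ V7 ℝ (Fin l) :=
  (1 / 2 : ℝ) • ∑ i : Fin 7, ∑ j : Fin 7, a i j • ((α.curryLeft (e7 i)).curryLeft (e7 j))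

/-- The 1-form `α = x² dx³ + x⁴ dx⁵` on `ℝ⁷` (0-based: `α_x(w) = x 1 * w 2 + x 3 * w 4`). -/
def alpha14 (x : V7) (w : V7) : ℝ := x 1 * w 2 + x 3 * w 4

/-- The exterior derivative of a 1-form `α` on the vector space `ℝ⁷`, as a function:
`(dα)_x (u, v) = D_u (α_·(v))(x) − D_v (α_·(u))(x)`. -/
def dOneForm (α : V7 → V7 → ℝ) (x u v : V7) : ℝ :=
  fderiv ℝ (fun y => α y v) x u - fderiv ℝ (fun y => α y u) x v

/-!
Write `ω = e² ∧ e³ + e⁴ ∧ e⁵` (1-based). Contractions by three vectors are invariant under cyclic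
permutation, so `(u ∧ w) ⌟ (v ⌟ φ₀) = v ⌟ ((u ∧ w) ⌟ φ₀)`. Since
`(e₂ ∧ e₃) ⌟ φ₀ = (e₆ ∧ e₇) ⌟ φ₀ = e¹`, every 2-form `v ⌟ φ₀` takes the same value on `e₂ ∧ e₃`
and on `e₆ ∧ e₇`, whereas `ω` takes the values `1` and `0`. On the other hand
`(e₆ ∧ e₇) ⌟ ⋆φ₀ = ω`, and `ω = dα`, so the constant bivector field `e₆ ∧ e₇` witnesses that `α`
is coRochesterian.
-/

section AlternatingMap

variable {R M N : Type*} [CommRing R] [AddCommGroup M] [Module R M] [AddCommGroup N] [Module R N]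
  {n : ℕ}

theorem curryLeft_sub (f g : M [⋀^Fin (n + 1)]→ₗ[R] N) :
    (f - g).curryLeft = f.curryLeft - g.curryLeft :=
  map_sub AlternatingMap.curryLeftLinearMap f g

theorem curryLeft_neg (f : M [⋀^Fin (n + 1)]→ₗ[R] N) : (-f).curryLeft = -f.curryLeft :=
  map_neg AlternatingMap.curryLeftLinearMap f

/-- The contraction `(u, v) ↦ (u ∧ v) ⌟ f` by decomposable bivectors, as a bilinear map. -/
def curryLeftTwice (f : M [⋀^Fin (n + 2)]→ₗ[R] N) : M →ₗ[R] M →ₗ[R] M [⋀^Fin n]→ₗ[R] N :=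
  AlternatingMap.curryLeftLinearMap ∘ₗ f.curryLeft

theorem isAlt_curryLeftTwice (f : M [⋀^Fin (n + 2)]→ₗ[R] N) : (curryLeftTwice f).IsAlt :=
  f.curryLeft_same

theorem curryLeft_curryLeft_swap (f : M [⋀^Fin (n + 2)]→ₗ[R] N) (u v : M) :
    (f.curryLeft v).curryLeft u = -(f.curryLeft u).curryLeft v :=
  ((isAlt_curryLeftTwice f).neg u v).symm

theorem curryLeft_curryLeft_curryLeft_rotate (f : M [⋀^Fin (n + 3)]→ₗ[R] N) (u v w : M) :
    ((f.curryLeft u).curryLeft v).curryLeft w = ((f.curryLeft v).curryLeft w).curryLeft u := by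
  rw [curryLeft_curryLeft_swap f v u, curryLeft_curryLeft_swap (f.curryLeft v) u w,
    curryLeft_neg, LinearMap.neg_apply]

end AlternatingMap

section Bivector

variable {R ι P : Type*} [CommRing R]

/-- The coefficient matrix of `X ∧ Y`, in the normalization `½ ∑ᵢⱼ aᵢⱼ eᵢ ∧ eⱼ` of `contr2`. -/
def bivector (X Y : ι → R) : Matrix ι ι R :=
  Matrix.vecMulVec X Y - Matrix.vecMulVec Y X

theorem transpose_bivector (X Y : ι → R) : (bivector X Y)ᵀ = -bivector X Y := by
  simp [bivector, Matrix.transpose_vecMulVec]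

variable [Fintype ι] [DecidableEq ι] [AddCommGroup P] [Module R P]
  {B : (ι → R) →ₗ[R] (ι → R) →ₗ[R] P}

theorem sum_sum_vecMulVec_smul_single (X Y : ι → R) :
    ∑ i, ∑ j, Matrix.vecMulVec X Y i j • B (Pi.single i 1) (Pi.single j 1) = B X Y := by
  conv_rhs => rw [pi_eq_sum_univ' X, pi_eq_sum_univ' Y, ← LinearMap.flip_apply]
  simp only [map_sum, map_smul, LinearMap.flip_apply, LinearMap.sum_apply, LinearMap.smul_apply,
    Finset.smul_sum, Matrix.vecMulVec_apply, mul_smul]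

theorem sum_sum_bivector_smul_single (hB : B.IsAlt) (X Y : ι → R) :
    ∑ i, ∑ j, bivector X Y i j • B (Pi.single i 1) (Pi.single j 1) = (2 : R) • B X Y := by
  simp only [bivector, Matrix.sub_apply, sub_smul, Finset.sum_sub_distrib,
    sum_sum_vecMulVec_smul_single]
  rw [← hB.neg X Y, sub_neg_eq_add, two_smul]

end Bivector

theorem contr2_bivector {l : ℕ} (X Y : V7) (α : V7 [⋀^Fin (l + 2)]→ₗ[ℝ] ℝ) :
    contr2 (bivector X Y) α = (α.curryLeft X).curryLeft Y := by
  have h := sum_sum_bivector_smul_single (isAlt_curryLeftTwice α) X Y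
  calc contr2 (bivector X Y) α = (1 / 2 : ℝ) • (2 : ℝ) • (α.curryLeft X).curryLeft Y :=
        congrArg _ h
    _ = (α.curryLeft X).curryLeft Y := by rw [smul_smul]; norm_num

theorem eForm_apply {k : ℕ} (idx : Fin k → Fin 7) (v : Fin k → V7) :
    eForm idx v = (Matrix.of fun i j ↦ v i (idx j)).det :=
  rfl

theorem eForm_vecCons {k : ℕ} (idx : Fin (k + 1) → Fin 7) (v : V7) (w : Fin k → V7) :
    eForm idx (Matrix.vecCons v w) =
      ∑ t : Fin (k + 1), (-1) ^ (t : ℕ) * v (idx t) * eForm (t.removeNth idx) w :=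
  Matrix.det_succ_row_zero _

theorem removeNth_succ_vecCons {κ : Type*} {n : ℕ} (a : κ) (f : Fin (n + 1) → κ)
    (t : Fin (n + 1)) :
    t.succ.removeNth (Matrix.vecCons a f) = Matrix.vecCons a (t.removeNth f) := by
  funext s
  cases s using Fin.cases <;> simp [Fin.removeNth]

theorem curryLeft_eForm_two (i j : Fin 7) (v : V7) :
    (eForm ![i, j]).curryLeft v = v i • eForm ![j] - v j • eForm ![i] := by
  ext w
  -- The indices must stay in the form `Fin.succ _` for `removeNth_succ_vecCons` to apply.
  simp [eForm_vecCons, Fin.sum_univ_succ, removeNth_succ_vecCons, sub_eq_add_neg,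
    -Fin.reduceSucc, -Fin.succ_zero_eq_one]

theorem curryLeft_eForm_three (i j k : Fin 7) (v : V7) :
    (eForm ![i, j, k]).curryLeft v =
      v i • eForm ![j, k] - v j • eForm ![i, k] + v k • eForm ![i, j] := by
  ext w
  simp [eForm_vecCons, Fin.sum_univ_succ, removeNth_succ_vecCons, sub_eq_add_neg, add_assoc,
    -Fin.reduceSucc, -Fin.succ_zero_eq_one]

theorem curryLeft_eForm_four (i j k l : Fin 7) (v : V7) :
    (eForm ![i, j, k, l]).curryLeft v =
      v i • eForm ![j, k, l] - v j • eForm ![i, k, l] + v k • eForm ![i, j, l]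
        - v l • eForm ![i, j, k] := by
  ext w
  simp [eForm_vecCons, Fin.sum_univ_succ, removeNth_succ_vecCons, -Fin.reduceSucc,
    -Fin.succ_zero_eq_one]
  ring

theorem psi0_curryLeft_e7_five_six :
    (psi0.curryLeft (e7 5)).curryLeft (e7 6) = eForm ![1, 2] + eForm ![3, 4] := by
  simp [psi0, curryLeft_sub, curryLeft_eForm_four, curryLeft_eForm_three, e7, add_comm]

theorem phi0_curryLeft_e7_one_two : (phi0.curryLeft (e7 1)).curryLeft (e7 2) = eForm ![0] := by
  simp [phi0, curryLeft_sub, curryLeft_eForm_three, curryLeft_eForm_two, curryLeft_neg, e7]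

theorem phi0_curryLeft_e7_five_six : (phi0.curryLeft (e7 5)).curryLeft (e7 6) = eForm ![0] := by
  simp [phi0, curryLeft_sub, curryLeft_eForm_three, curryLeft_eForm_two, curryLeft_neg, e7]

theorem phi0_curryLeft_ne (v : V7) : phi0.curryLeft v ≠ eForm ![1, 2] + eForm ![3, 4] := by
  intro hv
  have h : ((phi0.curryLeft v).curryLeft (e7 1)).curryLeft (e7 2) =
      ((phi0.curryLeft v).curryLeft (e7 5)).curryLeft (e7 6) := by
    rw [curryLeft_curryLeft_curryLeft_rotate, curryLeft_curryLeft_curryLeft_rotate phi0 v (e7 5),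
      phi0_curryLeft_e7_one_two, phi0_curryLeft_e7_five_six]
  have one_eq_zero := congrArg (· ![]) h
  simp [hv, eForm_apply, e7, Matrix.det_fin_two] at one_eq_zero

theorem dOneForm_add {α β : V7 → V7 → ℝ} {x : V7}
    (hα : ∀ w, DifferentiableAt ℝ (fun y ↦ α y w) x)
    (hβ : ∀ w, DifferentiableAt ℝ (fun y ↦ β y w) x) (u v : V7) :
    dOneForm (α + β) x u v = dOneForm α x u v + dOneForm β x u v := by
  have fderiv_eval_add (w : V7) : fderiv ℝ (fun y ↦ (α + β) y w) x =
      fderiv ℝ (fun y ↦ α y w) x + fderiv ℝ (fun y ↦ β y w) x :=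
    fderiv_add (hα w) (hβ w)
  simp only [dOneForm, fderiv_eval_add, add_apply]
  ring

theorem dOneForm_coord_mul_coord (i j : Fin 7) (x u v : V7) :
    dOneForm (fun y w ↦ y i * w j) x u v = eForm ![i, j] ![u, v] := by
  have fderiv_eval (u w : V7) : fderiv ℝ (fun y : V7 ↦ y i * w j) x u = u i * w j := by
    rw [((hasFDerivAt_apply i x).mul_const (w j)).fderiv]
    simp [mul_comm]
  simp [dOneForm, fderiv_eval, eForm_apply, Matrix.det_fin_two, mul_comm (v i)]

theorem dOneForm_alpha14 (x u v : V7) :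
    dOneForm alpha14 x u v = (eForm ![1, 2] + eForm ![3, 4]) ![u, v] := by
  have differentiable (i j : Fin 7) (w : V7) : DifferentiableAt ℝ (fun y : V7 ↦ y i * w j) x := by
    fun_prop
  exact (dOneForm_add (differentiable 1 2) (differentiable 3 4) u v).trans
    (congrArg₂ _ (dOneForm_coord_mul_coord 1 2 x u v) (dOneForm_coord_mul_coord 3 4 x u v))

/-- `dα = X ⌟ φ₀` for some vector field `X`, on which no regularity is imposed. -/
def IsRochesterian (α : V7 → V7 → ℝ) : Prop :=
  ∃ X : V7 → V7, ∀ x u v : V7, dOneForm α x u v = phi0.curryLeft (X x) ![u, v]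

/-- `dα = Q ⌟ ⋆φ₀` for some 2-multivector field `Q`, given by its skew-symmetric coefficient matrix;
no regularity is imposed on `Q`. -/
def IsCoRochesterian (α : V7 → V7 → ℝ) : Prop :=
  ∃ a : V7 → Matrix (Fin 7) (Fin 7) ℝ, (∀ x, (a x)ᵀ = -(a x)) ∧
    ∀ x u v : V7, dOneForm α x u v = contr2 (a x) psi0 ![u, v]

theorem isCoRochesterian_of_dOneForm_eq {α : V7 → V7 → ℝ} (X Y : V7 → V7)
    (h : ∀ x u v, dOneForm α x u v = (psi0.curryLeft (X x)).curryLeft (Y x) ![u, v]) :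
    IsCoRochesterian α :=
  ⟨fun x ↦ bivector (X x) (Y x), fun _ ↦ transpose_bivector _ _,
    fun x u v ↦ by rw [h, contr2_bivector]⟩

theorem IsRochesterian.exists_phi0_curryLeft_eq {α : V7 → V7 → ℝ} (hα : IsRochesterian α) {x : V7}
    {ω : V7 [⋀^Fin 2]→ₗ[ℝ] ℝ} (hω : ∀ u v, dOneForm α x u v = ω ![u, v]) :
    ∃ v, phi0.curryLeft v = ω := by
  obtain ⟨X, hX⟩ := hα
  refine ⟨X x, AlternatingMap.ext fun w ↦ ?_⟩
  have w_eq : w = ![w 0, w 1] := (FinVec.etaExpand_eq w).symm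
  rw [w_eq, ← hX, hω]

theorem isCoRochesterian_alpha14 : IsCoRochesterian alpha14 :=
  isCoRochesterian_of_dOneForm_eq (fun _ ↦ e7 5) (fun _ ↦ e7 6) fun x u v ↦ by
    rw [psi0_curryLeft_e7_five_six, dOneForm_alpha14]

theorem not_isRochesterian_alpha14 : ¬IsRochesterian alpha14 := fun h ↦
  have ⟨v, hv⟩ := h.exists_phi0_curryLeft_eq (dOneForm_alpha14 0)
  phi0_curryLeft_ne v hv

theorem coRochesterian_not_Rochesterian :
    -- `(e₆ ∧ e₇) ⌟ ⋆φ₀ = e² ∧ e³ + e⁴ ∧ e⁵`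
    ((psi0.curryLeft (e7 5)).curryLeft (e7 6) = eForm ![1, 2] + eForm ![3, 4]) ∧
    -- `(e₆ ∧ e₇) ⌟ φ₀ = e¹`
    ((phi0.curryLeft (e7 5)).curryLeft (e7 6) = eForm ![0]) ∧
    -- there is no vector `v` with `v ⌟ φ₀ = e² ∧ e³ + e⁴ ∧ e⁵`
    (∀ v : V7, phi0.curryLeft v ≠ eForm ![1, 2] + eForm ![3, 4]) ∧
    -- `dα = e² ∧ e³ + e⁴ ∧ e⁵` for `α = x² dx³ + x⁴ dx⁵`
    (∀ x u v : V7, dOneForm alpha14 x u v = (eForm ![1, 2] + eForm ![3, 4]) ![u, v]) ∧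
    -- `α` is coRochesterian: `dα = Q ⌟ ⋆φ₀` for some 2-multivector field `Q`
    (∃ a : V7 → Matrix (Fin 7) (Fin 7) ℝ, (∀ x, (a x)ᵀ = -(a x)) ∧
      ∀ x u v : V7, dOneForm alpha14 x u v = contr2 (a x) psi0 ![u, v]) ∧
    -- but `α` is not Rochesterian: there is no vector field `X` with `dα = X ⌟ φ₀`
    ¬ (∃ X : V7 → V7, ∀ x u v : V7, dOneForm alpha14 x u v = phi0.curryLeft (X x) ![u, v]) := by
  exact ⟨psi0_curryLeft_e7_five_six, phi0_curryLeft_e7_five_six, phi0_curryLeft_ne,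
    dOneForm_alpha14, isCoRochesterian_alpha14, not_isRochesterian_alpha14⟩

end
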